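/- Suppose ς ∈ L²(ℝ²) satisfies ‖ς‖₂ < √(2/π). Then for every u ∈ W^{1,2}(ℝ²) one has ∫(|∇u|² + u(e^u - 1) - ς u) dx ≥ (√(2/π) - ‖ς‖₂)·‖u‖_{1,2} - 2/π. -/

import Mathlib

open MeasureTheory

/-!
Write `N` for the `W^{1,2}` norm of `u`. The fundamental theorem of calculus on lines gives the
planar Sobolev inequality `4 ∫ ‖F‖² ≤ (∫ ‖DF‖)²`, which for `F = u²` becomes Ladyzhenskaya's
inequality `∫ u⁴ ≤ ∫ u² · ∫ |∇u|²` and, after interpolation, `∫ |u|³ ≤ N³`. Since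
`w² / (1 + |w|) ≤ w (e^w - 1)`, Cauchy–Schwarz shows
`∫ u (e^u - 1) ≥ (∫ u²)² / (∫ u² + ∫ |u|³)`. For `0 ≤ c ≤ 1` the sum of this integral and `∫ |∇u|²`
is therefore at least `c N² / (c + N) ≥ c N - c²`, and the source term costs at most `‖ς‖₂ N`.
-/

section CauchySchwarz

variable {α : Type*} [MeasurableSpace α] {μ : Measure α}

theorem sq_integral_le_integral_mul_integral_of_sq_le_mul {f g h : α → ℝ}
    (hf : Integrable f μ) (hg : Integrable g μ) (hh : Integrable h μ)
    (hf0 : 0 ≤ᵐ[μ] f) (hg0 : 0 ≤ᵐ[μ] g) (hle : ∀ᵐ x ∂μ, h x ^ 2 ≤ f x * g x) :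
    (∫ x, h x ∂μ) ^ 2 ≤ (∫ x, f x ∂μ) * ∫ x, g x ∂μ := by
  have pointwise (t : ℝ) : ∀ᵐ x ∂μ, 0 ≤ t * t * f x + 2 * t * h x + g x := by
    filter_upwards [hf0, hg0, hle] with x (hfx : 0 ≤ f x) (hgx : 0 ≤ g x) hhx
    rcases hfx.eq_or_lt with hfx | hfx
    · have hhx0 : h x = 0 := by simpa [← hfx, sq_nonpos_iff] using hhx
      simpa [← hfx, hhx0] using hgx
    · refine nonneg_of_mul_nonneg_right ?_ hfx
      nlinarith [sq_nonneg (t * f x + h x)]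
  have quadratic (t : ℝ) :
      0 ≤ (∫ x, f x ∂μ) * (t * t) + (2 * ∫ x, h x ∂μ) * t + ∫ x, g x ∂μ := by
    have hnonneg : 0 ≤ ∫ x, (t * t * f x + 2 * t * h x + g x) ∂μ :=
      integral_nonneg_of_ae (pointwise t)
    rw [integral_add ((hf.const_mul _).fun_add (hh.const_mul _)) hg,
      integral_add (hf.const_mul _) (hh.const_mul _), integral_const_mul, integral_const_mul]
      at hnonneg
    linarith
  have := discrim_le_zero quadratic
  rw [discrim] at this
  linarith

theorem integral_mul_le_sqrt_mul_sqrt {f g : α → ℝ} (hf : Integrable (fun x => f x ^ 2) μ)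
    (hg : Integrable (fun x => g x ^ 2) μ) (hfg : Integrable (fun x => f x * g x) μ) :
    ∫ x, f x * g x ∂μ ≤ √(∫ x, f x ^ 2 ∂μ) * √(∫ x, g x ^ 2 ∂μ) := by
  rw [← Real.sqrt_mul (integral_nonneg fun x => sq_nonneg (f x))]
  exact Real.le_sqrt_of_sq_le <| sq_integral_le_integral_mul_integral_of_sq_le_mul hf hg hfg
    (.of_forall fun x => sq_nonneg _) (.of_forall fun x => sq_nonneg _)
    (.of_forall fun x => (mul_pow _ _ 2).le)

end CauchySchwarz

section Sobolev

variable {V : Type*} [NormedAddCommGroup V] [NormedSpace ℝ V] [CompleteSpace V]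

theorem two_mul_norm_le_integral_norm_of_hasDerivAt {f f' : ℝ → V}
    (hderiv : ∀ x, HasDerivAt f (f' x) x) (hf : Integrable f) (hf' : Integrable f') (a : ℝ) :
    2 * ‖f a‖ ≤ ∫ x, ‖f' x‖ := by
  have left : ∫ x in Set.Iic a, f' x = f a := by
    simpa using integral_Iic_of_hasDerivAt_of_tendsto' (fun x _ => hderiv x) hf'.integrableOn
      (tendsto_zero_of_hasDerivAt_of_integrableOn_Iic (fun x _ => hderiv x)
        hf'.integrableOn (hf.integrableOn (s := Set.Iic a)))
  have right : ∫ x in Set.Ioi a, f' x = -f a := by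
    simpa using integral_Ioi_of_hasDerivAt_of_tendsto' (fun x _ => hderiv x) hf'.integrableOn
      (tendsto_zero_of_hasDerivAt_of_integrableOn_Ioi (fun x _ => hderiv x)
        hf'.integrableOn (hf.integrableOn (s := Set.Ioi a)))
  calc 2 * ‖f a‖ = ‖∫ x in Set.Iic a, f' x‖ + ‖∫ x in Set.Ioi a, f' x‖ := by
        rw [left, right, norm_neg, two_mul]
    _ ≤ (∫ x in Set.Iic a, ‖f' x‖) + ∫ x in Set.Ioi a, ‖f' x‖ := by
        gcongr <;> exact norm_integral_le_integral_norm _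
    _ = ∫ x, ‖f' x‖ :=
        intervalIntegral.integral_Iic_add_Ioi hf'.norm.integrableOn hf'.norm.integrableOn

theorem integral_norm_sq_le_of_partial_derivs {F F₁ F₂ : ℝ × ℝ → V}
    (hderiv₁ : ∀ x y, HasDerivAt (fun s => F (s, y)) (F₁ (x, y)) x)
    (hderiv₂ : ∀ x y, HasDerivAt (fun t => F (x, t)) (F₂ (x, y)) y)
    (hF : Integrable F) (hF₁ : Integrable F₁) (hF₂ : Integrable F₂) :
    Integrable (fun z => ‖F z‖ ^ 2) ∧
      4 * ∫ z, ‖F z‖ ^ 2 ≤ (∫ z, ‖F₁ z‖) * ∫ z, ‖F₂ z‖ := by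
  rw [Measure.volume_eq_prod] at *
  let P : ℝ → ℝ := fun y => ∫ x, ‖F₁ (x, y)‖
  let Q : ℝ → ℝ := fun x => ∫ y, ‖F₂ (x, y)‖
  have horizontal : ∀ᵐ y : ℝ, ∀ x, 2 * ‖F (x, y)‖ ≤ P y := by
    filter_upwards [hF.prod_left_ae, hF₁.prod_left_ae] with y hFy hF₁y
    exact two_mul_norm_le_integral_norm_of_hasDerivAt (fun x => hderiv₁ x y) hFy hF₁y
  have vertical : ∀ᵐ x : ℝ, ∀ y, 2 * ‖F (x, y)‖ ≤ Q x := by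
    filter_upwards [hF.prod_right_ae, hF₂.prod_right_ae] with x hFx hF₂x
    exact two_mul_norm_le_integral_norm_of_hasDerivAt (fun y => hderiv₂ x y) hFx hF₂x
  have hQP : Integrable (fun z : ℝ × ℝ => Q z.1 * P z.2) (volume.prod volume) :=
    hF₂.norm.integral_prod_left.mul_prod hF₁.norm.integral_prod_right
  have hle : ∀ᵐ z : ℝ × ℝ ∂volume.prod volume, 4 * ‖F z‖ ^ 2 ≤ Q z.1 * P z.2 := by
    filter_upwards [Measure.quasiMeasurePreserving_snd.ae horizontal,
      Measure.quasiMeasurePreserving_fst.ae vertical] with z hz₁ hz₂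
    calc 4 * ‖F z‖ ^ 2 = 2 * ‖F z‖ * (2 * ‖F z‖) := by ring
      _ ≤ Q z.1 * P z.2 :=
          mul_le_mul (hz₂ z.2) (hz₁ z.1) (by positivity) (le_trans (by positivity) (hz₂ z.2))
  have hF2 : Integrable (fun z => ‖F z‖ ^ 2) (volume.prod volume) := by
    refine hQP.mono' (hF.aestronglyMeasurable.norm.pow 2) ?_
    filter_upwards [hle] with z hz
    rw [Real.norm_of_nonneg (by positivity)]
    linarith [sq_nonneg ‖F z‖]
  refine ⟨hF2, ?_⟩
  calc 4 * ∫ z, ‖F z‖ ^ 2 ∂volume.prod volume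
      = ∫ z, 4 * ‖F z‖ ^ 2 ∂volume.prod volume := (integral_const_mul _ _).symm
    _ ≤ ∫ z, Q z.1 * P z.2 ∂volume.prod volume := integral_mono_ae (hF2.const_mul 4) hQP hle
    _ = (∫ z, ‖F₁ z‖ ∂volume.prod volume) * ∫ z, ‖F₂ z‖ ∂volume.prod volume := by
        rw [integral_prod_mul, integral_prod _ hF₂.norm, integral_prod_symm _ hF₁.norm, mul_comm]

theorem integrable_smul_fderiv {E : Type*} [NormedAddCommGroup E] [NormedSpace ℝ E]
    [FiniteDimensional ℝ E] [MeasurableSpace E] [BorelSpace E] {μ : Measure E} {u : E → ℝ}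
    (hdiff : Differentiable ℝ u) (hu : Integrable (fun x => u x ^ 2) μ)
    (hDu : Integrable (fun x => ‖fderiv ℝ u x‖ ^ 2) μ) :
    Integrable (fun x => u x • fderiv ℝ u x) μ := by
  have hu_mem : MemLp u 2 μ :=
    (memLp_two_iff_integrable_sq hdiff.continuous.aestronglyMeasurable).2 hu
  have hDu_mem : MemLp (fderiv ℝ u) 2 μ :=
    (memLp_two_iff_integrable_sq_norm (measurable_fderiv ℝ u).aestronglyMeasurable).2 hDu
  exact memLp_one_iff_integrable.1 (hDu_mem.smul hu_mem)

variable {E : Type*} [NormedAddCommGroup E] [InnerProductSpace ℝ E]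

/-- Cartesian coordinates on a Euclidean plane, as the map `(x, y) ↦ x b₀ + y b₁` out of `ℝ × ℝ`.
The product carries the supremum norm, so this is a linear homeomorphism but not an isometry. -/
noncomputable def planeCoordinates (b : OrthonormalBasis (Fin 2) ℝ E) : (ℝ × ℝ) ≃L[ℝ] E :=
  (ContinuousLinearEquiv.finTwoArrow ℝ ℝ).symm.trans
    ((PiLp.continuousLinearEquiv 2 ℝ fun _ : Fin 2 => ℝ).symm.trans
      b.repr.symm.toContinuousLinearEquiv)

theorem planeCoordinates_apply (b : OrthonormalBasis (Fin 2) ℝ E) (z : ℝ × ℝ) :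
    planeCoordinates b z = z.1 • b 0 + z.2 • b 1 := by
  simp [planeCoordinates, ← b.sum_repr_symm]

variable [FiniteDimensional ℝ E] [MeasurableSpace E] [BorelSpace E]

theorem measurePreserving_planeCoordinates (b : OrthonormalBasis (Fin 2) ℝ E) :
    MeasurePreserving (planeCoordinates b) volume volume :=
  b.measurePreserving_repr_symm.comp <|
    (PiLp.volume_preserving_toLp (Fin 2)).comp <|
      (volume_preserving_finTwoArrow ℝ).symm _

theorem integral_norm_sq_le_sq_integral_norm_fderiv (hE : Module.finrank ℝ E = 2) {F : E → V}
    (hdiff : Differentiable ℝ F) (hF : Integrable F) (hF' : Integrable (fderiv ℝ F)) :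
    Integrable (fun x => ‖F x‖ ^ 2) ∧
      4 * ∫ x, ‖F x‖ ^ 2 ≤ (∫ x, ‖fderiv ℝ F x‖) ^ 2 := by
  let b : OrthonormalBasis (Fin 2) ℝ E := (stdOrthonormalBasis ℝ E).reindex (finCongr hE)
  let e := planeCoordinates b
  have he : MeasurePreserving e volume volume := measurePreserving_planeCoordinates b
  have he' : MeasurableEmbedding e := e.toHomeomorph.measurableEmbedding
  have hderiv₁ (x y : ℝ) :
      HasDerivAt (fun s => F (e (s, y))) (fderiv ℝ F (e (x, y)) (b 0)) x := by
    refine (hdiff _).hasFDerivAt.comp_hasDerivAt x ?_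
    simpa [e, planeCoordinates_apply] using
      ((hasDerivAt_id x).smul_const (b 0)).add_const (y • b 1)
  have hderiv₂ (x y : ℝ) :
      HasDerivAt (fun t => F (e (x, t))) (fderiv ℝ F (e (x, y)) (b 1)) y := by
    refine (hdiff _).hasFDerivAt.comp_hasDerivAt y ?_
    simpa [e, planeCoordinates_apply] using
      ((hasDerivAt_id y).smul_const (b 1)).const_add (x • b 0)
  have hpartial (i : Fin 2) : Integrable fun x => fderiv ℝ F x (b i) :=
    hF'.apply_continuousLinearMap (b i)
  have hpartial_le (i : Fin 2) : ∫ x, ‖fderiv ℝ F x (b i)‖ ≤ ∫ x, ‖fderiv ℝ F x‖ :=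
    integral_mono (hpartial i).norm hF'.norm fun x => by
      simpa using (fderiv ℝ F x).le_opNorm (b i)
  obtain ⟨hint, hle⟩ := integral_norm_sq_le_of_partial_derivs (F := fun z => F (e z))
    (F₁ := fun z => fderiv ℝ F (e z) (b 0)) (F₂ := fun z => fderiv ℝ F (e z) (b 1))
    hderiv₁ hderiv₂
    ((he.integrable_comp_emb he').2 hF) ((he.integrable_comp_emb he').2 (hpartial 0))
    ((he.integrable_comp_emb he').2 (hpartial 1))
  rw [he.integral_comp he' fun x => ‖F x‖ ^ 2,
    he.integral_comp he' fun x => ‖fderiv ℝ F x (b 0)‖,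
    he.integral_comp he' fun x => ‖fderiv ℝ F x (b 1)‖] at hle
  refine ⟨(he.integrable_comp_emb he').1 hint, hle.trans ?_⟩
  rw [sq]
  exact mul_le_mul (hpartial_le 0) (hpartial_le 1) (by positivity) (by positivity)

theorem ladyzhenskaya_inequality (hE : Module.finrank ℝ E = 2) {u : E → ℝ}
    (hdiff : Differentiable ℝ u) (hu : Integrable fun x => u x ^ 2)
    (hDu : Integrable fun x => ‖fderiv ℝ u x‖ ^ 2) :
    Integrable (fun x => u x ^ 4) ∧
      ∫ x, u x ^ 4 ≤ (∫ x, u x ^ 2) * ∫ x, ‖fderiv ℝ u x‖ ^ 2 := by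
  have hfderiv (x : E) : fderiv ℝ (fun y => u y ^ 2) x = (2 : ℝ) • u x • fderiv ℝ u x := by
    rw [((hdiff x).hasFDerivAt.pow 2).fderiv]
    simp [smul_smul]
  have hprod := integrable_smul_fderiv hdiff hu hDu
  obtain ⟨hint, hle⟩ := integral_norm_sq_le_sq_integral_norm_fderiv hE (hdiff.fun_pow 2) hu
    ((hprod.smul (2 : ℝ)).congr (.of_forall fun x => (hfderiv x).symm))
  have hnorm (x : E) : ‖u x ^ 2‖ ^ 2 = u x ^ 4 := by
    rw [Real.norm_eq_abs, sq_abs]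
    ring
  have hcs : (∫ x, ‖u x • fderiv ℝ u x‖) ^ 2 ≤ (∫ x, u x ^ 2) * ∫ x, ‖fderiv ℝ u x‖ ^ 2 :=
    sq_integral_le_integral_mul_integral_of_sq_le_mul hu hDu hprod.norm
      (.of_forall fun x => sq_nonneg _) (.of_forall fun x => sq_nonneg _)
      (.of_forall fun x => by rw [norm_smul, mul_pow, Real.norm_eq_abs, sq_abs])
  simp only [hnorm, hfderiv, norm_smul (2 : ℝ), Real.norm_ofNat, integral_const_mul] at hint hle
  exact ⟨hint, by linarith⟩

theorem integral_abs_cube_le_sobolev_norm_cube (hE : Module.finrank ℝ E = 2) {u : E → ℝ}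
    (hdiff : Differentiable ℝ u) (hu : Integrable fun x => u x ^ 2)
    (hDu : Integrable fun x => ‖fderiv ℝ u x‖ ^ 2) :
    Integrable (fun x => |u x| ^ 3) ∧
      ∫ x, |u x| ^ 3 ≤ √((∫ x, u x ^ 2) + ∫ x, ‖fderiv ℝ u x‖ ^ 2) ^ 3 := by
  obtain ⟨hu4, hlady⟩ := ladyzhenskaya_inequality hE hdiff hu hDu
  have hu3 : Integrable fun x => |u x| ^ 3 := by
    refine (hu.add hu4).mono' (hdiff.continuous.abs.pow 3).aestronglyMeasurable
      (.of_forall fun x => ?_)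
    rw [Real.norm_of_nonneg (by positivity), Pi.add_apply, ← sq_abs, ← (by decide : Even 4).pow_abs]
    nlinarith [mul_nonneg (sq_nonneg |u x|) (sq_nonneg (|u x| - 1)), sq_nonneg (|u x| ^ 2)]
  refine ⟨hu3, ?_⟩
  set A := ∫ x, u x ^ 2
  set B := ∫ x, ‖fderiv ℝ u x‖ ^ 2
  have hA : 0 ≤ A := integral_nonneg fun x => sq_nonneg _
  have hB : 0 ≤ B := integral_nonneg fun x => sq_nonneg _
  refine le_of_sq_le_sq ?_ (by positivity)
  calc (∫ x, |u x| ^ 3) ^ 2 ≤ A * ∫ x, u x ^ 4 :=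
        sq_integral_le_integral_mul_integral_of_sq_le_mul hu hu4 hu3
          (.of_forall fun x => sq_nonneg _) (.of_forall fun x => by positivity)
          (.of_forall fun x => by
            rw [← sq_abs (u x), ← (by decide : Even 4).pow_abs (u x)]
            exact le_of_eq (by ring))
    _ ≤ A * (A * B) := by gcongr
    _ ≤ (A + B) * ((A + B) * (A + B)) := by gcongr <;> linarith
    _ = (√(A + B) ^ 2) ^ 3 := by
        rw [Real.sq_sqrt (by positivity)]
        ring
    _ = (√(A + B) ^ 3) ^ 2 := pow_right_comm _ 2 3

end Sobolev

section Coercivity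

theorem sq_le_mul_exp_sub_one_mul_one_add_abs (w : ℝ) :
    w ^ 2 ≤ w * (Real.exp w - 1) * (1 + |w|) := by
  rcases le_total 0 w with hw | hw
  · rw [abs_of_nonneg hw]
    nlinarith [mul_nonneg hw (sub_nonneg.2 (Real.add_one_le_exp w)), pow_nonneg hw 3]
  · have hexp : Real.exp w * (1 - w) ≤ 1 := by
      calc Real.exp w * (1 - w) ≤ Real.exp w * Real.exp (-w) := by
            gcongr
            exact Real.one_sub_le_exp_neg w
        _ = 1 := by rw [← Real.exp_add, add_neg_cancel, Real.exp_zero]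
    rw [abs_of_nonpos hw]
    nlinarith [mul_nonneg (neg_nonneg.2 hw) (sub_nonneg.2 hexp)]

theorem mul_exp_sub_one_nonneg (w : ℝ) : 0 ≤ w * (Real.exp w - 1) :=
  nonneg_of_mul_nonneg_left ((sq_nonneg w).trans (sq_le_mul_exp_sub_one_mul_one_add_abs w))
    (by positivity)

theorem sq_integral_sq_le_integral_mul_exp_sub_one_mul {α : Type*} [MeasurableSpace α]
    {μ : Measure α} {u : α → ℝ} (hu : Integrable (fun x => u x ^ 2) μ)
    (hu3 : Integrable (fun x => |u x| ^ 3) μ)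
    (hexp : Integrable (fun x => u x * (Real.exp (u x) - 1)) μ) :
    (∫ x, u x ^ 2 ∂μ) ^ 2 ≤
      (∫ x, u x * (Real.exp (u x) - 1) ∂μ) * ((∫ x, u x ^ 2 ∂μ) + ∫ x, |u x| ^ 3 ∂μ) := by
  rw [← integral_add hu hu3]
  refine sq_integral_le_integral_mul_integral_of_sq_le_mul hexp (hu.add hu3) hu
    (.of_forall fun x => mul_exp_sub_one_nonneg _) (.of_forall fun x => by positivity)
    (.of_forall fun x => ?_)
  calc (u x ^ 2) ^ 2 = u x ^ 2 * u x ^ 2 := sq _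
    _ ≤ u x * (Real.exp (u x) - 1) * (1 + |u x|) * u x ^ 2 := by
        gcongr
        exact sq_le_mul_exp_sub_one_mul_one_add_abs _
    _ = u x * (Real.exp (u x) - 1) * (u x ^ 2 + |u x| ^ 3) := by
        rw [← sq_abs (u x)]
        ring

theorem mul_sub_sq_le_add_of_sq_le_mul_add {A B J T N c : ℝ} (hA : 0 ≤ A) (hB : 0 ≤ B)
    (hJ : 0 ≤ J) (hN : 0 ≤ N) (hc : 0 ≤ c) (hN2 : N ^ 2 = A + B) (hAJ : A ^ 2 ≤ J * (A + T))
    (hT : c * T ≤ N ^ 3) : c * N - c ^ 2 ≤ B + J := by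
  rcases hN.eq_or_lt with rfl | hN_pos
  · nlinarith [sq_nonneg c]
  have hAN : A ≤ N ^ 2 := by linarith
  have hden : 0 < c * A + N ^ 3 := by positivity
  have hJ_lower : c * A ^ 2 / (c * A + N ^ 3) ≤ J := by
    rw [div_le_iff₀ hden]
    nlinarith [mul_le_mul_of_nonneg_left hAJ hc, mul_le_mul_of_nonneg_left hT hJ]
  -- For fixed `N` the right-hand side decreases in `A`, so the extreme case is `B = 0`.
  have hN_lower : c * N ^ 2 / (c + N) ≤ B + c * A ^ 2 / (c * A + N ^ 3) :=
    calc c * N ^ 2 / (c + N) = N ^ 2 - N ^ 3 / (c + N) := by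
          field_simp
          ring
      _ ≤ N ^ 2 - A * N ^ 3 / (c * A + N ^ 3) := by
          gcongr ?_ - ?_
          rw [div_le_div_iff₀ hden (by positivity)]
          nlinarith [mul_le_mul_of_nonneg_right hAN (pow_nonneg hN 4)]
      _ = B + c * A ^ 2 / (c * A + N ^ 3) := by
          rw [hN2]
          field_simp
          ring
  have hlinear : c * N - c ^ 2 ≤ c * N ^ 2 / (c + N) := by
    rw [le_div_iff₀ (by positivity)]
    nlinarith [pow_nonneg hc 3]
  linarith

variable {E : Type*} [NormedAddCommGroup E] [InnerProductSpace ℝ E] [FiniteDimensional ℝ E]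
  [MeasurableSpace E] [BorelSpace E]

theorem mul_sobolev_norm_sub_sq_le (hE : Module.finrank ℝ E = 2) {u : E → ℝ} {c : ℝ}
    (hc : 0 ≤ c) (hc1 : c ≤ 1) (hdiff : Differentiable ℝ u)
    (hu : Integrable fun x => u x ^ 2) (hDu : Integrable fun x => ‖fderiv ℝ u x‖ ^ 2)
    (hexp : Integrable fun x => u x * (Real.exp (u x) - 1)) :
    c * √((∫ x, u x ^ 2) + ∫ x, ‖fderiv ℝ u x‖ ^ 2) - c ^ 2 ≤
      (∫ x, ‖fderiv ℝ u x‖ ^ 2) + ∫ x, u x * (Real.exp (u x) - 1) := by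
  have hA : 0 ≤ ∫ x, u x ^ 2 := integral_nonneg fun x => sq_nonneg _
  have hB : 0 ≤ ∫ x, ‖fderiv ℝ u x‖ ^ 2 := integral_nonneg fun x => sq_nonneg _
  obtain ⟨hu3, hcube⟩ := integral_abs_cube_le_sobolev_norm_cube hE hdiff hu hDu
  have hcube_nonneg : 0 ≤ ∫ x, |u x| ^ 3 := integral_nonneg fun x => by positivity
  exact mul_sub_sq_le_add_of_sq_le_mul_add hA hB
    (integral_nonneg fun x => mul_exp_sub_one_nonneg _) (Real.sqrt_nonneg _) hc
    (Real.sq_sqrt (add_nonneg hA hB))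
    (sq_integral_sq_le_integral_mul_exp_sub_one_mul hu hu3 hexp)
    ((mul_le_of_le_one_left hcube_nonneg hc1).trans hcube)

theorem vacuum_coercivity_general (hE : Module.finrank ℝ E = 2) {ς u : E → ℝ} {c : ℝ}
    (hc : 0 ≤ c) (hc1 : c ≤ 1) (hς : Integrable fun x => ς x ^ 2)
    (hdiff : Differentiable ℝ u) (hu : Integrable fun x => u x ^ 2)
    (hDu : Integrable fun x => ‖fderiv ℝ u x‖ ^ 2)
    (hexp : Integrable fun x => u x * (Real.exp (u x) - 1))
    (hςu : Integrable fun x => ς x * u x) :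
    (c - √(∫ x, ς x ^ 2)) * √((∫ x, u x ^ 2) + ∫ x, ‖fderiv ℝ u x‖ ^ 2) - c ^ 2 ≤
      ∫ x, (‖fderiv ℝ u x‖ ^ 2 + u x * (Real.exp (u x) - 1) - ς x * u x) := by
  have hsource : ∫ x, ς x * u x ≤
      √(∫ x, ς x ^ 2) * √((∫ x, u x ^ 2) + ∫ x, ‖fderiv ℝ u x‖ ^ 2) :=
    (integral_mul_le_sqrt_mul_sqrt hς hu hςu).trans <| by
      gcongr
      exact le_add_of_nonneg_right (integral_nonneg fun x => sq_nonneg _)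
  have hcoercive := mul_sobolev_norm_sub_sq_le hE hc hc1 hdiff hu hDu hexp
  rw [integral_sub (hDu.fun_add hexp) hςu, integral_add hDu hexp, sub_mul]
  linarith

end Coercivity

theorem norm_gradient_eq_norm_fderiv {𝕜 E : Type*} [RCLike 𝕜] [NormedAddCommGroup E]
    [InnerProductSpace 𝕜 E] [CompleteSpace E] (u : E → 𝕜) (x : E) :
    ‖gradient u x‖ = ‖fderiv 𝕜 u x‖ :=
  (InnerProductSpace.toDual 𝕜 E).symm.norm_map _

theorem vacuum_coercivity (ς u : EuclideanSpace ℝ (Fin 2) → ℝ)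
    (hς2 : Integrable (fun x => (ς x) ^ 2))
    (hςsmall : Real.sqrt (∫ x, (ς x) ^ 2) < Real.sqrt (2 / Real.pi))
    (hdiff : Differentiable ℝ u)
    (h2 : Integrable (fun x => (u x) ^ 2))
    (hg : Integrable (fun x => ‖gradient u x‖ ^ 2))
    (hexp : Integrable (fun x => u x * (Real.exp (u x) - 1)))
    (hςu : Integrable (fun x => ς x * u x)) :
    (∫ x, (‖gradient u x‖ ^ 2 + u x * (Real.exp (u x) - 1) - ς x * u x))
      ≥ (Real.sqrt (2 / Real.pi) - Real.sqrt (∫ x, (ς x) ^ 2)) *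
          Real.sqrt ((∫ x, (u x) ^ 2) + ∫ x, ‖gradient u x‖ ^ 2)
        - 2 / Real.pi := by
  have hc1 : √(2 / Real.pi) ≤ 1 :=
    Real.sqrt_le_one.2 ((div_le_one Real.pi_pos).2 Real.two_le_pi)
  simp only [norm_gradient_eq_norm_fderiv] at hg ⊢
  simpa only [Real.sq_sqrt (by positivity : 0 ≤ 2 / Real.pi)] using
    vacuum_coercivity_general (by simp) (Real.sqrt_nonneg _) hc1 hς2 hdiff h2 hg hexp hςu
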